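/- Let R, H ⊂ ℤ² be finite disjoint sets, and define the region Γ ⊂ ℤ³ by Γ = {(x,y,0) : (x,y) ∈ R ∪ H} ∪ {(x,y,1),(x,y,2) : (x,y) ∈ H, x+y even} ∪ {(x,y,−1),(x,y,−2) : (x,y) ∈ H, x+y odd}. Then Γ admits a tiling by copies of the 3×1×1 tromino if and only if R admits a tiling by 3×1 and 1×3 bars; moreover the tromino tilings of Γ are in bijection with the bar tilings of R. -/

import Mathlib

/-!
The middle cube of a tower can be covered only by the tower itself. Its height is nonzero, and at
a nonzero height no two adjacent cubes belong to `Γ`, since towers over adjacent cells point in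
opposite directions; so the tromino covering it is vertical, and the column holds only three cubes.
Hence every tromino tiling of `Γ` contains all towers. What remains is a copy of `R` in the plane
`z = 0`, where trominoes are the same as bars.
-/

/-- A tiling of `Γ` by tiles satisfying `P`: a partition of `Γ` into such tiles. -/
def IsTiling {α : Type*} (P : Set α → Prop) (Γ : Set α) (T : Set (Set α)) : Prop :=
  (∀ s ∈ T, P s ∧ s.Nonempty) ∧ T.PairwiseDisjoint id ∧ ⋃₀ T = Γ

/-- A `3 × 1 × 1` tromino in `ℤ³`: three collinear cubes `{c, c+e, c+2e}` for a
standard basis vector `e`. -/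
def IsTromino (s : Set (Fin 3 → ℤ)) : Prop :=
  ∃ (c : Fin 3 → ℤ) (i : Fin 3),
    s = {c, c + Pi.single i 1, c + Pi.single i 1 + Pi.single i 1}

/-- A `3 × 1` or `1 × 3` bar in `ℤ²`: three collinear cells `{p, p+u, p+2u}` for a
standard basis vector `u`. -/
def IsBar (s : Set (ℤ × ℤ)) : Prop :=
  ∃ (p : ℤ × ℤ) (u : ℤ × ℤ), (u = (1, 0) ∨ u = (0, 1)) ∧ s = {p, p + u, p + u + u}

section Tiling

variable {α β : Type*} {P : Set α → Prop} {Γ Δ : Set α} {T S : Set (Set α)}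

theorem IsTiling.subset (hT : IsTiling P Γ T) {s : Set α} (hs : s ∈ T) : s ⊆ Γ :=
  hT.2.2 ▸ Set.subset_sUnion_of_mem hs

theorem IsTiling.mem_of_forall_eq (hT : IsTiling P Γ T) {t : Set α} {x : α} (hx : x ∈ Γ)
    (hforced : ∀ s, P s → s ⊆ Γ → x ∈ s → s = t) : t ∈ T := by
  obtain ⟨s, hs, hxs⟩ : x ∈ ⋃₀ T := hT.2.2.symm ▸ hx
  exact hforced s (hT.1 s hs).1 (hT.subset hs) hxs ▸ hs

theorem IsTiling.disjoint (hT : IsTiling P Γ T) (hS : IsTiling P Δ S) (h : Disjoint Γ Δ) :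
    Disjoint T S := by
  refine Set.disjoint_left.2 fun s hsT hsS ↦ ?_
  obtain ⟨x, hx⟩ := (hT.1 s hsT).2
  exact Set.disjoint_left.1 h (hT.subset hsT hx) (hS.subset hsS hx)

theorem IsTiling.union (hT : IsTiling P Γ T) (hS : IsTiling P Δ S) (h : Disjoint Γ Δ) :
    IsTiling P (Γ ∪ Δ) (T ∪ S) := by
  refine ⟨fun s hs ↦ hs.elim (hT.1 s) (hS.1 s), ?_, ?_⟩
  · exact Set.pairwiseDisjoint_union.2
      ⟨hT.2.1, hS.2.1, fun _ hs _ ht _ ↦ h.mono (hT.subset hs) (hS.subset ht)⟩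
  · rw [Set.sUnion_union, hT.2.2, hS.2.2]

theorem IsTiling.sdiff (hT : IsTiling P Γ T) (hST : S ⊆ T) :
    IsTiling P (Γ \ ⋃₀ S) (T \ S) := by
  refine ⟨fun s hs ↦ hT.1 s hs.1, hT.2.1.subset Set.sdiff_subset, ?_⟩
  have hpair : (T ∪ S).PairwiseDisjoint id := (Set.union_eq_left.2 hST).symm ▸ hT.2.1
  rw [← hT.2.2]
  simpa only [Set.sUnion_eq_biUnion, id] using (Set.biUnion_sdiff_biUnion_eq hpair).symm

/-- If the tiles of a tiling `S` of `Δ ⊆ Γ` occur in every tiling of `Γ`, then removing them is a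
bijection onto the tilings of `Γ \ Δ`. -/
def IsTiling.sdiffEquiv (hS : IsTiling P Δ S) (hΔ : Δ ⊆ Γ)
    (hforced : ∀ T, IsTiling P Γ T → S ⊆ T) :
    {T // IsTiling P Γ T} ≃ {T // IsTiling P (Γ \ Δ) T} where
  toFun T := ⟨T.1 \ S, hS.2.2 ▸ T.2.sdiff (hforced T.1 T.2)⟩
  invFun T := ⟨T.1 ∪ S, by
    simpa only [Set.sdiff_union_of_subset hΔ] using T.2.union hS Set.disjoint_sdiff_left⟩
  left_inv T := Subtype.ext (Set.sdiff_union_of_subset (hforced T.1 T.2))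
  right_inv T := Subtype.ext
    (Set.union_sdiff_cancel_right (T.2.disjoint hS Set.disjoint_sdiff_left).le_bot)

variable {Q : Set β → Prop} {f : α → β}

theorem isTiling_image_iff (hf : f.Injective) (hPQ : ∀ s, Q (f '' s) ↔ P s) :
    IsTiling Q (f '' Γ) (Set.image f '' T) ↔ IsTiling P Γ T := by
  have hdisj : (Set.image f '' T).PairwiseDisjoint id ↔ T.PairwiseDisjoint id := by
    rw [hf.image_injective.injOn.pairwiseDisjoint_image]
    simp only [Set.PairwiseDisjoint, Set.Pairwise, Function.onFun, Function.comp_apply, id,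
      Set.disjoint_image_iff hf]
  simp only [IsTiling, Set.forall_mem_image, hPQ, Set.image_nonempty, hdisj, ← Set.image_sUnion,
    hf.image_injective.eq_iff]

/-- Tilings are transported along an injection under which the two notions of tile agree. -/
def tilingImageEquiv (Γ : Set α) (hf : f.Injective) (hPQ : ∀ s, Q (f '' s) ↔ P s) :
    {T // IsTiling P Γ T} ≃ {T // IsTiling Q (f '' Γ) T} :=
  have himage (T : {T // IsTiling Q (f '' Γ) T}) : Set.image f '' (Set.image f ⁻¹' T.1) = T.1 :=
    Set.image_preimage_eq_of_subset fun _ hs ↦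
      Set.subset_range_iff_exists_image_eq.1
        ((T.2.subset hs).trans (Set.image_subset_range f Γ))
  { toFun := fun T ↦ ⟨Set.image f '' T.1, (isTiling_image_iff hf hPQ).2 T.2⟩
    invFun := fun T ↦
      ⟨Set.image f ⁻¹' T.1, (isTiling_image_iff hf hPQ).1 ((himage T).symm ▸ T.2)⟩
    left_inv := fun T ↦ Subtype.ext (Set.preimage_image_eq T.1 hf.image_injective)
    right_inv := fun T ↦ Subtype.ext (himage T) }

end Tiling

/-- The cube of `ℤ³` at height `z` over the cell `p`. -/
def cube (p : ℤ × ℤ) (z : ℤ) : Fin 3 → ℤ := ![p.1, p.2, z]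

theorem exists_eq_cube (x : Fin 3 → ℤ) : ∃ p z, x = cube p z :=
  ⟨(x 0, x 1), x 2, by ext i; fin_cases i <;> rfl⟩

theorem cube_inj {p q : ℤ × ℤ} {z w : ℤ} : cube p z = cube q w ↔ p = q ∧ z = w := by
  simp [cube, Prod.ext_iff, and_assoc]

theorem cube_left_injective (z : ℤ) : Function.Injective (cube · z) :=
  fun _ _ h ↦ (cube_inj.1 h).1

theorem cube_add_single_zero (p : ℤ × ℤ) (z : ℤ) :
    cube p z + Pi.single 0 1 = cube (p + (1, 0)) z := by
  ext i; fin_cases i <;> simp [cube]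

theorem cube_add_single_one (p : ℤ × ℤ) (z : ℤ) :
    cube p z + Pi.single 1 1 = cube (p + (0, 1)) z := by
  ext i; fin_cases i <;> simp [cube]

theorem cube_add_single_two (p : ℤ × ℤ) (z : ℤ) :
    cube p z + Pi.single 2 1 = cube p (z + 1) := by
  ext i; fin_cases i <;> simp [cube]

theorem isTromino_iff_horizontal_or_vertical {s : Set (Fin 3 → ℤ)} :
    IsTromino s ↔ (∃ z b, IsBar b ∧ s = (cube · z) '' b) ∨
      ∃ p z, s = cube p '' Set.Icc z (z + 2) := by
  have hIcc (z : ℤ) : Set.Icc z (z + 2) = {z, z + 1, z + 1 + 1} := by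
    ext w
    simp only [Set.mem_Icc, Set.mem_insert_iff, Set.mem_singleton_iff]
    omega
  constructor
  · rintro ⟨c, i, rfl⟩
    obtain ⟨p, z, rfl⟩ := exists_eq_cube c
    fin_cases i
    · exact .inl ⟨z, _, ⟨p, (1, 0), .inl rfl, rfl⟩, by
        simp [Set.image_insert_eq, cube_add_single_zero]⟩
    · exact .inl ⟨z, _, ⟨p, (0, 1), .inr rfl, rfl⟩, by
        simp [Set.image_insert_eq, cube_add_single_one]⟩
    · exact .inr ⟨p, z, by simp [hIcc, Set.image_insert_eq, cube_add_single_two]⟩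
  · rintro (⟨z, _, ⟨p, _, rfl | rfl, rfl⟩, rfl⟩ | ⟨p, z, rfl⟩)
    · exact ⟨cube p z, 0, by simp only [Set.image_insert_eq, Set.image_singleton,
        cube_add_single_zero]⟩
    · exact ⟨cube p z, 1, by simp only [Set.image_insert_eq, Set.image_singleton,
        cube_add_single_one]⟩
    · exact ⟨cube p z, 2, by simp only [hIcc, Set.image_insert_eq, Set.image_singleton,
        cube_add_single_two]⟩

theorem isTromino_cube_image_iff (z : ℤ) (b : Set (ℤ × ℤ)) :
    IsTromino ((cube · z) '' b) ↔ IsBar b := by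
  refine ⟨fun h ↦ ?_, fun h ↦ isTromino_iff_horizontal_or_vertical.2 (.inl ⟨z, b, h, rfl⟩)⟩
  rcases isTromino_iff_horizontal_or_vertical.1 h with ⟨w, b', hb', heq⟩ | ⟨p, w, heq⟩
  · obtain rfl : z = w := by
      obtain ⟨p, u, -, rfl⟩ := hb'
      obtain ⟨q, -, hq⟩ := heq.superset (Set.mem_image_of_mem _ (Set.mem_insert p _))
      exact (cube_inj.1 hq).2
    exact (cube_left_injective z).image_injective heq ▸ hb'
  · have height_eq {v : ℤ} (hv : v ∈ Set.Icc w (w + 2)) : z = v := by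
      obtain ⟨q, -, hq⟩ := heq.superset (Set.mem_image_of_mem _ hv)
      exact (cube_inj.1 hq).2
    have := height_eq (v := w) (by simp)
    have := height_eq (v := w + 1) (by simp)
    omega

/-- The height of the lowest cube of the tower over `p`: the tower occupies heights `0, 1, 2` if
`p` is an even cell and `-2, -1, 0` if it is odd. -/
def towerBase (p : ℤ × ℤ) : ℤ := if Even (p.1 + p.2) then 0 else -2

theorem towerBase_eq_zero_or_neg_two (p : ℤ × ℤ) : towerBase p = 0 ∨ towerBase p = -2 :=
  ite_eq_or_eq _ _ _

theorem towerBase_add_unit {u : ℤ × ℤ} (hu : u = (1, 0) ∨ u = (0, 1)) (p : ℤ × ℤ) :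
    towerBase (p + u) = -2 - towerBase p := by
  have hparity : Even ((p + u).1 + (p + u).2) ↔ ¬Even (p.1 + p.2) := by
    rcases hu with rfl | rfl <;> simp only [Prod.fst_add, Prod.snd_add] <;> grind
  by_cases h : Even (p.1 + p.2) <;> simp only [towerBase, hparity, h] <;> norm_num

/-- The vertical tromino over the cell `p`, including its cube in the plane `z = 0`. -/
def tower (p : ℤ × ℤ) : Set (Fin 3 → ℤ) := cube p '' Set.Icc (towerBase p) (towerBase p + 2)

theorem cube_mem_tower {p q : ℤ × ℤ} {z : ℤ} :
    cube q z ∈ tower p ↔ q = p ∧ z ∈ Set.Icc (towerBase p) (towerBase p + 2) := by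
  simp only [tower, Set.mem_image, cube_inj]
  grind

theorem cube_zero_mem_tower {p q : ℤ × ℤ} : cube q 0 ∈ tower p ↔ q = p := by
  have := towerBase_eq_zero_or_neg_two p
  rw [cube_mem_tower, Set.mem_Icc, and_iff_left (by omega)]

theorem isTromino_tower (p : ℤ × ℤ) : IsTromino (tower p) :=
  isTromino_iff_horizontal_or_vertical.2 (.inr ⟨p, towerBase p, rfl⟩)

theorem isTiling_towers (H : Set (ℤ × ℤ)) :
    IsTiling IsTromino (⋃ p ∈ H, tower p) (tower '' H) := by
  refine ⟨?_, ?_, Set.sUnion_image tower H⟩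
  · rintro _ ⟨p, -, rfl⟩
    exact ⟨isTromino_tower p, cube p 0, cube_zero_mem_tower.2 rfl⟩
  · rintro _ ⟨p, -, rfl⟩ _ ⟨q, -, rfl⟩ hne
    refine Set.disjoint_left.2 fun x hxp hxq ↦ hne ?_
    obtain ⟨r, z, rfl⟩ := exists_eq_cube x
    rw [← (cube_mem_tower.1 hxp).1, ← (cube_mem_tower.1 hxq).1]

/-- The region `Γ` for arbitrary cell sets `R` and `H`, spelled layer by layer as in
`tromino_augmentation` so that the two agree definitionally. -/
def augmentedRegion (R H : Set (ℤ × ℤ)) : Set (Fin 3 → ℤ) :=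
  {x | ∃ p ∈ R ∪ H, x = cube p 0} ∪
  {x | ∃ p ∈ H, Even (p.1 + p.2) ∧ (x = cube p 1 ∨ x = cube p 2)} ∪
  {x | ∃ p ∈ H, Odd (p.1 + p.2) ∧ (x = cube p (-1) ∨ x = cube p (-2))}

section Region

variable {R H : Set (ℤ × ℤ)}

theorem cube_mem_augmentedRegion {p : ℤ × ℤ} {z : ℤ} :
    cube p z ∈ augmentedRegion R H ↔
      p ∈ R ∧ z = 0 ∨ p ∈ H ∧ z ∈ Set.Icc (towerBase p) (towerBase p + 2) := by
  simp only [augmentedRegion, Set.mem_union, Set.mem_ofPred_eq, cube_inj, Set.mem_Icc, towerBase]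
  grind

theorem augmentedRegion_eq_union_towers :
    augmentedRegion R H = (cube · 0) '' R ∪ ⋃ p ∈ H, tower p := by
  ext x
  obtain ⟨p, z, rfl⟩ := exists_eq_cube x
  simp only [cube_mem_augmentedRegion, Set.mem_union, Set.mem_image, Set.mem_iUnion, exists_prop,
    cube_mem_tower, cube_inj]
  grind

theorem augmentedRegion_sdiff_towers :
    augmentedRegion R H \ ⋃ p ∈ H, tower p = (cube · 0) '' (R \ H) := by
  have hpreimage : (cube · 0) ⁻¹' (⋃ p ∈ H, tower p) = H := by
    ext p
    simp [cube_zero_mem_tower]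
  rw [augmentedRegion_eq_union_towers, Set.union_sdiff_right, ← Set.image_sdiff_preimage,
    hpreimage]

theorem IsBar.height_eq_zero_of_subset {b : Set (ℤ × ℤ)} (hb : IsBar b) {z : ℤ}
    (hsub : (cube · z) '' b ⊆ augmentedRegion R H) : z = 0 := by
  obtain ⟨p, u, hu, rfl⟩ := hb
  have hp : cube p z ∈ augmentedRegion R H := hsub (Set.mem_image_of_mem _ (by simp))
  have hpu : cube (p + u) z ∈ augmentedRegion R H := hsub (Set.mem_image_of_mem _ (by simp))
  rw [cube_mem_augmentedRegion, Set.mem_Icc] at hp hpu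
  have := towerBase_add_unit hu p
  have := towerBase_eq_zero_or_neg_two p
  omega

theorem IsTromino.eq_tower_of_cube_mem {s : Set (Fin 3 → ℤ)} (hs : IsTromino s)
    (hsub : s ⊆ augmentedRegion R H) {p : ℤ × ℤ} {z : ℤ} (hz : z ≠ 0) (hps : cube p z ∈ s) :
    s = tower p := by
  rcases isTromino_iff_horizontal_or_vertical.1 hs with ⟨w, b, hb, rfl⟩ | ⟨q, w, rfl⟩
  · obtain ⟨q, -, hq⟩ := hps
    exact absurd ((cube_inj.1 hq).2.symm.trans (hb.height_eq_zero_of_subset hsub)) hz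
  · obtain ⟨v, -, hv⟩ := hps
    obtain rfl : q = p := (cube_inj.1 hv).1
    have hbounds {v : ℤ} (hv : v ∈ Set.Icc w (w + 2)) :=
      cube_mem_augmentedRegion.1 (hsub (Set.mem_image_of_mem (cube q) hv))
    have hbottom := hbounds (v := w) (by simp)
    have htop := hbounds (v := w + 2) (by simp)
    obtain rfl : w = towerBase q := by
      have := towerBase_eq_zero_or_neg_two q
      simp only [Set.mem_Icc] at hbottom htop
      omega
    rfl

theorem IsTiling.tower_mem {T : Set (Set (Fin 3 → ℤ))}
    (hT : IsTiling IsTromino (augmentedRegion R H) T) {p : ℤ × ℤ} (hp : p ∈ H) :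
    tower p ∈ T := by
  have hmiddle : cube p (towerBase p + 1) ∈ augmentedRegion R H :=
    cube_mem_augmentedRegion.2 (.inr ⟨hp, by simp⟩)
  have hheight : towerBase p + 1 ≠ 0 := by
    have := towerBase_eq_zero_or_neg_two p
    omega
  exact hT.mem_of_forall_eq hmiddle fun s hs hsub hps ↦ hs.eq_tower_of_cube_mem hsub hheight hps

end Region

/-- The bijection of the theorem, obtained by discarding the towers and identifying
the plane `z = 0` with `ℤ²`. -/
def trominoTilingEquivBarTiling (R H : Set (ℤ × ℤ)) :
    {T // IsTiling IsTromino (augmentedRegion R H) T} ≃ {T // IsTiling IsBar (R \ H) T} :=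
  have htowers : ⋃ p ∈ H, tower p ⊆ augmentedRegion R H :=
    augmentedRegion_eq_union_towers.symm ▸ Set.subset_union_right
  have hforced : ∀ T, IsTiling IsTromino (augmentedRegion R H) T → tower '' H ⊆ T :=
    fun _ hT ↦ Set.image_subset_iff.2 fun _ hp ↦ hT.tower_mem hp
  calc {T // IsTiling IsTromino (augmentedRegion R H) T}
    _ ≃ {T // IsTiling IsTromino (augmentedRegion R H \ ⋃ p ∈ H, tower p) T} :=
      (isTiling_towers H).sdiffEquiv htowers hforced
    _ ≃ {T // IsTiling IsTromino ((cube · 0) '' (R \ H)) T} :=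
      .subtypeEquivProp (by rw [augmentedRegion_sdiff_towers])
    _ ≃ {T // IsTiling IsBar (R \ H) T} :=
      (tilingImageEquiv (R \ H) (cube_left_injective 0) (isTromino_cube_image_iff 0)).symm

theorem tromino_augmentation_general (R H : Set (ℤ × ℤ)) :
    ((∃ T, IsTiling IsTromino (augmentedRegion R H) T) ↔ ∃ T, IsTiling IsBar (R \ H) T) ∧
    Nonempty ({T // IsTiling IsTromino (augmentedRegion R H) T} ≃
      {T // IsTiling IsBar (R \ H) T}) := by
  have e := trominoTilingEquivBarTiling R H
  refine ⟨?_, ⟨e⟩⟩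
  rw [← nonempty_subtype, ← nonempty_subtype]
  exact e.nonempty_congr

/-- The augmented region: `R ∪ H` on the `z = 0` plane, with vertical tromino towers
above (for even `x+y`) or below (for odd `x+y`) each hole cell of `H`.  It is
tromino-tileable iff `R` is bar-tileable, and the tilings are in bijection. -/
theorem tromino_augmentation
    (R H : Set (ℤ × ℤ)) (hR : R.Finite) (hH : H.Finite) (hdisj : Disjoint R H) :
    let Γ : Set (Fin 3 → ℤ) :=
      {x | ∃ p ∈ R ∪ H, x = ![p.1, p.2, 0]} ∪
      {x | ∃ p ∈ H, Even (p.1 + p.2) ∧ (x = ![p.1, p.2, 1] ∨ x = ![p.1, p.2, 2])} ∪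
      {x | ∃ p ∈ H, Odd (p.1 + p.2) ∧ (x = ![p.1, p.2, -1] ∨ x = ![p.1, p.2, -2])}
    ((∃ T, IsTiling IsTromino Γ T) ↔ ∃ T, IsTiling IsBar R T) ∧
    Nonempty ({T // IsTiling IsTromino Γ T} ≃ {T // IsTiling IsBar R T}) := by
  intro Γ
  exact hdisj.sdiff_eq_left ▸ tromino_augmentation_general R H
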